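/- Let G be a word hyperbolic group generated by a finite set 𝒢 closed under inversion, and let C₁ and C₂ be virtually cyclic subgroups of G whose intersection C₁ ∩ C₂ is finite. Then there is a constant K₃ > 0 such that for any c₁ ∈ C₁, if u is a shortest (with respect to l_𝒢) element in the coset c₁C₂, then l_𝒢(u) ≥ l_𝒢(c₁)/K₃ − K₃. -/

import Mathlib

universe u v w

section Defs

variable {G : Type u} [Group G]

/-- A finite generating set closed under inversion. -/
def IsSymmGen (X : Set G) : Prop :=
  X.Finite ∧ (∀ x ∈ X, x⁻¹ ∈ X) ∧ Subgroup.closure X = ⊤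

/-- Word length of `g` with respect to `X`. -/
noncomputable def wordLength (X : Set G) (g : G) : ℕ :=
  sInf {n : ℕ | ∃ l : List G, l.length = n ∧ (∀ x ∈ l, x ∈ X) ∧ l.prod = g}

/-- Word metric. -/
noncomputable def wordDist (X : Set G) (g h : G) : ℕ :=
  wordLength X (g⁻¹ * h)

/-- Gromov product with respect to the word metric. -/
noncomputable def gromovProd (X : Set G) (x y w : G) : ℝ :=
  ((wordDist X x w : ℝ) + (wordDist X y w : ℝ) - (wordDist X x y : ℝ)) / 2

end Defs

/-- A group is word hyperbolic if for some finite symmetric generating set the Gromov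
product satisfies the hyperbolicity inequality. -/
def IsWordHyperbolic (G : Type u) [Group G] : Prop :=
  ∃ X : Set G, IsSymmGen X ∧ ∃ δ : ℝ, 0 ≤ δ ∧
    ∀ x y z w : G,
      gromovProd X x z w ≥ min (gromovProd X x y w) (gromovProd X y z w) - δ

/-- A subgroup is quasiconvex: it is finitely generated and word lengths distort linearly. -/
def IsQuasiconvex {G : Type u} [Group G] (A : Subgroup G) : Prop :=
  ∃ Y : Set ↥A, IsSymmGen Y ∧ ∃ X : Set G, IsSymmGen X ∧ ∃ c : ℝ, 0 < c ∧
    ∀ a : ↥A, (wordLength Y a : ℝ) ≤ c * (wordLength X (a : G) : ℝ) + c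

/-- Property (Q): every finitely generated subgroup is quasiconvex. -/
def HasPropertyQ (G : Type u) [Group G] : Prop :=
  ∀ H : Subgroup G, H.FG → IsQuasiconvex H

/-- A group is virtually cyclic if it has a cyclic subgroup of finite index. -/
def IsVirtuallyCyclic (C : Type u) [Group C] : Prop :=
  ∃ Z : Subgroup C, IsCyclic ↥Z ∧ Z.FiniteIndex

/-- `G` is the amalgamated free product of its subgroups `A` and `B` along `C`:
`C = A ⊓ B`, `A ⊔ B = ⊤` and `G` has the pushout universal property. -/
structure IsAmalgamatedFreeProduct {G : Type u} [Group G] (A B C : Subgroup G) : Prop where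
  le_left : C ≤ A
  le_right : C ≤ B
  inf_eq : A ⊓ B = C
  sup_eq_top : A ⊔ B = ⊤
  univ : ∀ (K : Type u) [Group K] (f : ↥A →* K) (g : ↥B →* K),
    (∀ (c : G) (hA : c ∈ A) (hB : c ∈ B), f ⟨c, hA⟩ = g ⟨c, hB⟩) →
    ∃ h : G →* K, (∀ a : ↥A, h a = f a) ∧ (∀ b : ↥B, h b = g b)

section Words

variable {G : Type u} [Group G]

/-- A word over the alphabet `X`. -/
def IsWordOver (X : Set G) (l : List G) : Prop := ∀ x ∈ l, x ∈ X

/-- A geodesic word over `X`. -/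
def IsGeodesicWord (X : Set G) (l : List G) : Prop :=
  IsWordOver X l ∧ l.length = wordLength X l.prod

/-- A `lam`-quasigeodesic word over `X`: every subword `v` satisfies
`l(v) ≤ lam * l_X(v̄) + lam`. -/
def IsQuasigeodesicWord (X : Set G) (lam : ℝ) (l : List G) : Prop :=
  IsWordOver X l ∧
    ∀ v : List G, v <:+: l → (v.length : ℝ) ≤ lam * (wordLength X v.prod : ℝ) + lam

/-- `g` is a shortest element of the subset `S` with respect to `wordLength X`. -/
def ShortestIn (X : Set G) (g : G) (S : Set G) : Prop :=
  g ∈ S ∧ ∀ s ∈ S, wordLength X g ≤ wordLength X s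

end Words

/-- `G` together with `ια, ιβ` is the pushout of `ℤ → A, 1 ↦ x` and `ℤ → B, 1 ↦ y`. -/
structure IsAmalgamOverZ {A : Type u} {B : Type v} {G : Type w}
    [Group A] [Group B] [Group G]
    (ια : A →* G) (ιβ : B →* G) (x : A) (y : B) : Prop where
  comm : ια x = ιβ y
  gen : ια.range ⊔ ιβ.range = ⊤
  univ : ∀ (K : Type (max u v w)) [Group K] (f : A →* K) (g : B →* K),
    f x = g y → ∃ h : G →* K, h.comp ια = f ∧ h.comp ιβ = g

/-!
In a hyperbolic space, two geodesics issuing from `o` stay close together up to the Gromov product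
of their far endpoints. Hence, if `A` and `B` are quasiconvex subgroups containing `a` and `b` with
large Gromov product `(a·b)₁`, then `A` contains a long element at bounded distance from `B`. When
`A ∩ B` is finite, only finitely many elements of `A` are that close to `B`, so the Gromov product
is bounded and `ℓ(a⁻¹b)` equals `ℓ(a) + ℓ(b)` up to a bounded error.

It remains to see that virtually cyclic subgroups are quasiconvex. Given `a` of infinite order, let
`p` be the midpoint of a geodesic from `1` to a large power of `a`. A small power `g = a ^ k` moves
both ends of the geodesic only a little, so it translates along the geodesic near `p`. Properness
lets us choose `k` so that this translation is long compared to `δ`, and then the local estimate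
`d(p, g²p) ≈ 2 d(p, gp)` propagates to all powers of `g`.
-/

section Hyperbolic

variable {X : Type*} [PseudoMetricSpace X] {δ ε ε' D c : ℝ} {o x x' y y' z p p' q : X} {s t : Set X}

/-- `p` lies on a geodesic from `x` to `y` up to an additive error `ε`. -/
def IsAlmostBetween (ε : ℝ) (x p y : X) : Prop :=
  dist x p + dist p y ≤ dist x y + ε

/-- Gromov hyperbolicity in its four-point form. Expanding the Gromov products shows that this is
the inequality `(x·z)_w ≥ min (x·y)_w (y·z)_w - δ` with the same constant; it forces `0 ≤ δ`. -/
def IsGromovHyperbolic (X : Type*) [PseudoMetricSpace X] (δ : ℝ) : Prop :=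
  ∀ x y z w : X,
    dist x z + dist y w ≤ max (dist x y + dist z w) (dist x w + dist y z) + 2 * δ

/-- Any two points have a midpoint up to an additive error `μ`. This replaces geodesicity for the
vertex set of a graph, where `μ = 1 / 2` will do. -/
def HasCoarseMidpoints (X : Type*) [PseudoMetricSpace X] (μ : ℝ) : Prop :=
  ∀ x y : X, ∃ p, dist x p ≤ dist x y / 2 + μ ∧ dist p y ≤ dist x y / 2 + μ

/-- A coarse version of `StarConvex`: between `o` and a point of `s` there are, up to a bounded
error `K`, points of `s` at every distance `r` from `o`. For `s` a subgroup and `o = 1` this serves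
as the notion of quasiconvexity. -/
def CoarselyStarConvex (o : X) (s : Set X) : Prop :=
  ∃ K : ℝ, 0 ≤ K ∧ ∀ y ∈ s, ∀ r, 0 ≤ r → r ≤ dist o y →
    ∃ z ∈ s, r ≤ dist o z ∧ dist o z ≤ r + K ∧ IsAlmostBetween K o z y

theorem IsAlmostBetween.symm (h : IsAlmostBetween ε x p y) : IsAlmostBetween ε y p x := by
  unfold IsAlmostBetween at *
  linarith [dist_comm x p, dist_comm p y, dist_comm x y]

theorem IsAlmostBetween.mono (h : IsAlmostBetween ε x p y) (hε : ε ≤ ε') :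
    IsAlmostBetween ε' x p y := by
  unfold IsAlmostBetween at *
  linarith

theorem IsAlmostBetween.nonneg (h : IsAlmostBetween ε x p y) : 0 ≤ ε := by
  unfold IsAlmostBetween at h
  linarith [dist_triangle x p y]

theorem IsAlmostBetween.map {f : X → X} (hf : Isometry f) (h : IsAlmostBetween ε x p y) :
    IsAlmostBetween ε (f x) (f p) (f y) := by
  simpa only [IsAlmostBetween, hf.dist_eq] using h

theorem IsAlmostBetween.of_dist_le (h : IsAlmostBetween ε x p y) (hx : dist x x' ≤ D)
    (hp : dist p p' ≤ D) (hy : dist y y' ≤ D) : IsAlmostBetween (ε + 6 * D) x' p' y' := by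
  unfold IsAlmostBetween at *
  linarith [dist_triangle_left x' p' x, dist_triangle x p p', dist_triangle_left p' y' p,
    dist_triangle p y y', dist_triangle x x' y, dist_triangle_right x' y y']

theorem isAlmostBetween_self_right (hε : 0 ≤ ε) : IsAlmostBetween ε x y y := by
  simpa [IsAlmostBetween] using hε

theorem dist_iterate_iterate_add {f : X → X} (hf : Isometry f) (x : X) (m n : ℕ) :
    dist (f^[m] x) (f^[m + n] x) = dist x (f^[n] x) := by
  induction m with
  | zero => simp
  | succ m ih =>
    rw [Nat.succ_add, Function.iterate_succ_apply', Function.iterate_succ_apply', hf.dist_eq, ih]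

namespace IsGromovHyperbolic

theorem nonneg (hX : IsGromovHyperbolic X δ) (x : X) : 0 ≤ δ := by
  simpa using hX x x x x

theorem le_or_le (hX : IsGromovHyperbolic X δ) (x y z w : X) :
    dist x z + dist y w ≤ dist x y + dist z w + 2 * δ ∨
      dist x z + dist y w ≤ dist x w + dist y z + 2 * δ := by
  simpa only [← le_max_iff, max_add_add_right] using hX x y z w

theorem dist_le_of_isAlmostBetween (hX : IsGromovHyperbolic X δ) (hp : IsAlmostBetween ε x p y)
    (hq : IsAlmostBetween ε x q y) : dist p q ≤ |dist x p - dist x q| + ε + 2 * δ := by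
  unfold IsAlmostBetween at hp hq
  have hpq := le_abs_self (dist x p - dist x q)
  have hqp := neg_le_abs (dist x p - dist x q)
  have := hX.le_or_le p x q y
  rw [dist_comm p x] at this
  rcases this with h | h <;> linarith

theorem isAlmostBetween_of_dist_le_gromovProduct (hX : IsGromovHyperbolic X δ)
    (hp : IsAlmostBetween ε x p y) (h : 2 * dist x p + dist y z ≤ dist x y + dist x z) :
    IsAlmostBetween (ε + 2 * δ) x p z := by
  have hε := hp.nonneg
  unfold IsAlmostBetween at *
  have := hX.le_or_le p y z x
  rw [dist_comm y x, dist_comm z x, dist_comm p x] at this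
  rcases this with h' | h' <;> linarith

theorem isAlmostBetween_of_dist_le (hX : IsGromovHyperbolic X δ) (hp : IsAlmostBetween ε x p y)
    (hx : dist x x' ≤ D) (hy : dist y y' ≤ D) (hxp : 3 * D + ε ≤ dist x p)
    (hpy : D + ε ≤ dist p y) : IsAlmostBetween (ε + 4 * δ) x' p y' := by
  have hxy : dist x p + dist p y ≤ dist x y + ε := hp
  have hp' : IsAlmostBetween (ε + 2 * δ) x p y' :=
    hX.isAlmostBetween_of_dist_le_gromovProduct hp
      (by linarith [dist_triangle_right x y y'])
  have hp'' : IsAlmostBetween (ε + 2 * δ + 2 * δ) y' p x' := by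
    refine hX.isAlmostBetween_of_dist_le_gromovProduct hp'.symm ?_
    linarith [dist_triangle_right x y y', dist_triangle x x' y', dist_comm x y', dist_comm x' y',
      dist_triangle y' y p, dist_comm y y', dist_comm y p]
  exact hp''.symm.mono (by linarith)

theorem abs_dist_map_map_add_sub_le (hX : IsGromovHyperbolic X δ) {f : X → X} (hf : Isometry f)
    (h₁ : dist x (f x) + dist p (f p) + 2 * δ < 2 * dist x (f p))
    (h₂ : dist x (f x) + dist p (f p) + 2 * δ < dist x (f (f p)) + dist x p) :
    |dist x (f (f p)) + dist x p - 2 * dist x (f p)| ≤ 2 * δ := by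
  have hle := hX.le_or_le x (f x) (f p) (f (f p))
  have hge := hX.le_or_le x (f x) (f (f p)) (f p)
  rw [dist_comm (f (f p)) (f p)] at hge
  simp only [hf.dist_eq] at hle hge
  rw [abs_le]
  rcases hle with hle | hle <;> rcases hge with hge | hge <;> constructor <;> linarith

/-- Near `p` the isometry `f` acts like a translation along the geodesic from `x` to `y`, so the
signed displacement `dist x (f p) - dist x p` doubles when `f` is iterated. -/
theorem two_mul_dist_map_le (hX : IsGromovHyperbolic X δ) {f : X → X} (hf : Isometry f)
    (hp : IsAlmostBetween ε x p y) (hx : dist x (f x) ≤ D) (hy : dist y (f y) ≤ D)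
    (hxp : 3 * D + ε + 4 * δ < dist x p) (hpy : D + ε ≤ dist p y) :
    2 * dist p (f p) ≤ dist p (f (f p)) + (14 * δ + 2 * ε) := by
  have hδ := hX.nonneg x
  have hε := hp.nonneg
  have hfp : IsAlmostBetween (ε + 4 * δ) x (f p) y :=
    hX.isAlmostBetween_of_dist_le (D := D) (hp.map hf) (by rwa [dist_comm])
      (by rwa [dist_comm]) (by rw [hf.dist_eq]; linarith) (by rwa [hf.dist_eq])
  have hshift : dist p (f p) ≤ |dist x p - dist x (f p)| + (ε + 4 * δ) + 2 * δ :=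
    hX.dist_le_of_isAlmostBetween (hp.mono (by linarith)) hfp
  have hbase : ∀ q, |dist x q - dist x (f q)| ≤ D := fun q => by
    rw [← hf.dist_eq x q, ← Real.dist_eq, dist_comm]
    exact (dist_dist_dist_le_left _ _ _).trans hx
  obtain ⟨hp₁, hp₂⟩ := abs_le.mp (hbase p)
  have hmono := (abs_le.mp (hbase (f p))).2
  obtain ⟨hdouble, hdouble'⟩ := abs_le.mp
    (hX.abs_dist_map_map_add_sub_le hf (x := x) (p := p) (by linarith [hbase p])
      (by linarith [hbase p]))
  have htri := dist_triangle x p (f (f p))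
  have htri' := dist_triangle_right x p (f (f p))
  rcases abs_cases (dist x p - dist x (f p)) with ⟨h, -⟩ | ⟨h, -⟩ <;> linarith

/-- The iterated images of a point under an isometry with large, almost doubling displacement form a
local quasigeodesic; hyperbolicity makes it a global one. -/
theorem dist_iterate_add_dist_le_succ (hX : IsGromovHyperbolic X δ) {f : X → X} (hf : Isometry f)
    (hdouble : 2 * dist p (f p) ≤ dist p (f (f p)) + c) (hlong : c + 3 * δ < dist p (f p)) (n : ℕ) :
    dist p (f^[n] p) + dist p (f p) ≤ dist p (f^[n + 1] p) + (c + 2 * δ) := by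
  have hδ := hX.nonneg p
  have hstep := dist_iterate_iterate_add hf p
  induction n with
  | zero =>
    have := dist_triangle p (f p) (f (f p))
    rw [hf.dist_eq] at this
    simp only [Function.iterate_zero, id, dist_self, zero_add, Function.iterate_one]
    linarith
  | succ n ih =>
    have := hX.le_or_le p (f p) (f (f p)) (f^[n + 2] p)
    rw [add_comm n 2, show dist (f p) (f^[2 + n] p) = dist p (f^[n + 1] p) by
        simpa [add_left_comm, add_comm] using hstep 1 (n + 1),
      show dist (f (f p)) (f^[2 + n] p) = dist p (f^[n] p) from hstep 2 n, hf.dist_eq,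
      add_comm 2 n] at this
    rcases this with h | h <;> linarith

theorem isAlmostBetween_iterate (hX : IsGromovHyperbolic X δ) {f : X → X} (hf : Isometry f)
    (hdouble : 2 * dist p (f p) ≤ dist p (f (f p)) + c) (hlong : c + 3 * δ < dist p (f p))
    (m n : ℕ) : IsAlmostBetween (c + 4 * δ) p (f^[m] p) (f^[m + n] p) := by
  have hδ := hX.nonneg p
  have hstep := dist_iterate_iterate_add hf p
  have hsucc := hX.dist_iterate_add_dist_le_succ hf hdouble hlong
  rw [IsAlmostBetween, hstep]
  cases n with
  | zero =>
    have := hsucc 0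
    simp only [Function.iterate_zero, id, dist_self, zero_add, Function.iterate_one] at this
    simp only [Function.iterate_zero, id, dist_self, add_zero]
    linarith
  | succ n =>
    have := hX.le_or_le p (f^[m] p) (f^[m + 1] p) (f^[m + (n + 1)] p)
    rw [hstep, hstep, Function.iterate_one,
      show dist (f^[m + 1] p) (f^[m + (n + 1)] p) = dist p (f^[n] p) by
        rw [← hstep (m + 1) n, add_assoc, add_comm 1 n]] at this
    rcases this with h | h <;> linarith [hsucc m, hsucc n]

theorem exists_dist_le_of_coarselyStarConvex (hX : IsGromovHyperbolic X δ)
    (hs : CoarselyStarConvex o s) (ht : CoarselyStarConvex o t) :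
    ∃ D, ∀ y ∈ s, ∀ y' ∈ t, ∀ r, 0 ≤ r → 2 * r + dist y y' + D ≤ dist o y + dist o y' →
      ∃ z ∈ s, ∃ z' ∈ t, r ≤ dist o z ∧ dist z z' ≤ D := by
  obtain ⟨K, hK, hs⟩ := hs
  obtain ⟨L, hL, ht⟩ := ht
  have hδ := hX.nonneg o
  refine ⟨2 * K + 2 * L + 4 * δ, fun y hy y' hy' r hr hle => ?_⟩
  obtain ⟨z, hz, hrz, hzr, hzy⟩ := hs y hy r hr (by linarith [dist_triangle o y y'])
  obtain ⟨z', hz', hrz', hzr', hzy'⟩ := ht y' hy' r hr (by linarith [dist_triangle_right o y y'])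
  have hzy'' : IsAlmostBetween (K + 2 * δ) o z y' :=
    hX.isAlmostBetween_of_dist_le_gromovProduct hzy (by linarith)
  have hclose : dist z z' ≤ |dist o z - dist o z'| + (K + L + 2 * δ) + 2 * δ :=
    hX.dist_le_of_isAlmostBetween (hzy''.mono (by linarith)) (hzy'.mono (by linarith))
  have hheight : |dist o z - dist o z'| ≤ K + L := abs_le.mpr ⟨by linarith, by linarith⟩
  exact ⟨z, hz, z', hz', hrz, by linarith⟩

end IsGromovHyperbolic

namespace CoarselyStarConvex

theorem union (hs : CoarselyStarConvex o s) (ht : CoarselyStarConvex o t) :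
    CoarselyStarConvex o (s ∪ t) := by
  obtain ⟨K, hK, hs⟩ := hs
  obtain ⟨L, hL, ht⟩ := ht
  refine ⟨K + L, add_nonneg hK hL, ?_⟩
  rintro y (hy | hy) r hr hry
  · obtain ⟨z, hz, hrz, hzr, hzy⟩ := hs y hy r hr hry
    exact ⟨z, .inl hz, hrz, by linarith, hzy.mono (by linarith)⟩
  · obtain ⟨z, hz, hrz, hzr, hzy⟩ := ht y hy r hr hry
    exact ⟨z, .inr hz, hrz, by linarith, hzy.mono (by linarith)⟩

theorem of_subset_of_dist_le (hs : CoarselyStarConvex o s) (hst : s ⊆ t)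
    (hD : ∀ y ∈ t, ∃ z ∈ s, dist z y ≤ D) : CoarselyStarConvex o t := by
  obtain ⟨K, hK, hs⟩ := hs
  refine ⟨K + 2 * |D|, by positivity, fun y hy r hr hry => ?_⟩
  obtain ⟨z, hz, hzy⟩ := hD y hy
  have hzy := hzy.trans (le_abs_self D)
  rcases le_total r (dist o z) with hrz | hzr
  · obtain ⟨w, hw, hrw, hwr, hwz⟩ := hs z hz r hr hrz
    refine ⟨w, hst hw, hrw, by linarith [abs_nonneg D], ?_⟩
    unfold IsAlmostBetween at *
    linarith [dist_triangle w z y, dist_triangle_right o z y]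
  · exact ⟨y, hy, hry, by linarith [dist_triangle o z y],
      isAlmostBetween_self_right (by positivity)⟩

theorem range_of_dist_succ_le {u : ℕ → X} (hu : u 0 = o) (hD : ∀ n, dist (u n) (u (n + 1)) ≤ D)
    (hε : ∀ m n, IsAlmostBetween ε o (u m) (u (m + n))) :
    CoarselyStarConvex o (Set.range u) := by
  have hD₀ : 0 ≤ D := dist_nonneg.trans (hD 0)
  have hε₀ : 0 ≤ ε := (hε 0 0).nonneg
  refine ⟨D + ε, add_nonneg hD₀ hε₀, ?_⟩
  rintro _ ⟨n, rfl⟩ r hr hrn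
  have hex : ∃ m, r ≤ dist o (u m) := ⟨n, hrn⟩
  obtain ⟨k, hk⟩ := Nat.exists_eq_add_of_le (Nat.find_min' hex hrn)
  refine ⟨u (Nat.find hex), ⟨_, rfl⟩, Nat.find_spec hex, ?_, ?_⟩
  · rcases hm : Nat.find hex with _ | m
    · rw [hu, dist_self]
      positivity
    · have hlt : dist o (u m) < r := not_le.mp (Nat.find_min hex (by lia))
      linarith [dist_triangle o (u m) (u (m + 1)), hD m]
  · rw [hk]
    exact (hε _ k).mono (by linarith)

end CoarselyStarConvex

end Hyperbolic

section SeminormedGroup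

variable {G : Type*} [SeminormedGroup G] {δ μ : ℝ} {a : G}

theorem dist_pow_pow_add (a : G) (m n : ℕ) : dist (a ^ m) (a ^ (m + n)) = ‖a ^ n‖ := by
  rw [pow_add, dist_eq_norm_inv_mul, inv_mul_cancel_left]

theorem exists_pow_lt_dist_mul (hball : ∀ r : ℝ, {g : G | ‖g‖ ≤ r}.Finite)
    (ha : ¬IsOfFinOrder a) (R : ℝ) :
    ∃ N : ℕ, ∀ p : G, ∃ k, 0 < k ∧ k ≤ N ∧ R < dist p (a ^ k * p) := by
  refine ⟨(hball R).toFinset.card + 1, fun p => ?_⟩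
  by_contra! hp
  have hinj : Function.Injective fun k : ℕ => p⁻¹ * (a ^ k * p) := fun i j hij =>
    injective_pow_iff_not_isOfFinOrder.mpr ha (mul_right_cancel (mul_left_cancel hij))
  have hmaps : ∀ k ∈ Finset.Icc 1 ((hball R).toFinset.card + 1),
      p⁻¹ * (a ^ k * p) ∈ (hball R).toFinset := fun k hk => by
    rw [Finset.mem_Icc] at hk
    simpa [dist_eq_norm_inv_mul] using hp k hk.1 hk.2
  simpa using Finset.card_le_card_of_injOn _ hmaps hinj.injOn

theorem exists_lt_norm_pow (hball : ∀ r : ℝ, {g : G | ‖g‖ ≤ r}.Finite)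
    (ha : ¬IsOfFinOrder a) (R : ℝ) : ∃ n : ℕ, R < ‖a ^ n‖ := by
  obtain ⟨N, hN⟩ := exists_pow_lt_dist_mul hball ha R
  obtain ⟨k, -, -, hk⟩ := hN 1
  exact ⟨k, by simpa using hk⟩

theorem IsGromovHyperbolic.exists_two_mul_dist_pow_mul_le (hG : IsGromovHyperbolic G δ)
    (hmid : HasCoarseMidpoints G μ) (hball : ∀ r : ℝ, {g : G | ‖g‖ ≤ r}.Finite)
    (ha : ¬IsOfFinOrder a) :
    ∃ c : ℝ, ∃ k > 0, ∃ p : G, c + 3 * δ < dist p (a ^ k * p) ∧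
      2 * dist p (a ^ k * p) ≤ dist p (a ^ k * (a ^ k * p)) + c := by
  obtain ⟨N, hN⟩ := exists_pow_lt_dist_mul hball ha (14 * δ + 4 * μ + 3 * δ)
  obtain ⟨M, hM⟩ := exists_lt_norm_pow hball ha (6 * (N * ‖a‖) + 6 * μ + 8 * δ)
  obtain ⟨p, hp, hp'⟩ := hmid 1 (a ^ M)
  obtain ⟨k, hk, hkN, hkp⟩ := hN p
  have hpM := dist_triangle 1 p (a ^ M)
  simp only [dist_one_left] at hp hp' hpM
  have hshort : ‖a ^ k‖ ≤ N * ‖a‖ := norm_pow_le_mul_norm.trans (by gcongr)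
  have hcomm : (a ^ M)⁻¹ * (a ^ k * a ^ M) = a ^ k := by
    rw [← pow_add, add_comm, pow_add, inv_mul_cancel_left]
  have hbetween : IsAlmostBetween (2 * μ) 1 p (a ^ M) := by
    simp only [IsAlmostBetween, dist_one_left]
    linarith
  refine ⟨14 * δ + 4 * μ, k, hk, p, hkp, ?_⟩
  have := hG.two_mul_dist_map_le (isometry_mul_left (a ^ k)) (D := N * ‖a‖) hbetween
    (by simpa using hshort) (by rwa [dist_eq_norm_inv_mul, hcomm])
    (by rw [dist_one_left]; linarith) (by linarith [hG.nonneg 1, norm_nonneg' (a ^ k)])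
  linarith

theorem IsGromovHyperbolic.exists_isAlmostBetween_pow_pow (hG : IsGromovHyperbolic G δ)
    (hmid : HasCoarseMidpoints G μ) (hball : ∀ r : ℝ, {g : G | ‖g‖ ≤ r}.Finite) (a : G) :
    ∃ k > 0, ∃ C, ∀ m n : ℕ, IsAlmostBetween C 1 ((a ^ k) ^ m) ((a ^ k) ^ (m + n)) := by
  by_cases ha : IsOfFinOrder a
  · exact ⟨orderOf a, ha.orderOf_pos, 0, by simp [IsAlmostBetween, pow_orderOf_eq_one]⟩
  · obtain ⟨c, k, hk, p, hlong, hdouble⟩ := hG.exists_two_mul_dist_pow_mul_le hmid hball ha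
    refine ⟨k, hk, c + 4 * δ + 6 * ‖p‖, fun m n => ?_⟩
    have h := hG.isAlmostBetween_iterate (isometry_mul_left (a ^ k)) hdouble hlong m n
    rw [mul_left_iterate_apply, mul_left_iterate_apply] at h
    refine h.of_dist_le ?_ ?_ ?_ <;> simp [dist_eq_norm_inv_mul]

theorem IsGromovHyperbolic.exists_isAlmostBetween_pow (hG : IsGromovHyperbolic G δ)
    (hmid : HasCoarseMidpoints G μ) (hball : ∀ r : ℝ, {g : G | ‖g‖ ≤ r}.Finite) (a : G) :
    ∃ C, ∀ m n : ℕ, IsAlmostBetween C 1 (a ^ m) (a ^ (m + n)) := by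
  obtain ⟨k, hk, C, hC⟩ := hG.exists_isAlmostBetween_pow_pow hmid hball a
  have hclose : ∀ q r : ℕ, r ≤ 2 * k →
      dist ((a ^ k) ^ q) (a ^ (k * q + r)) ≤ 2 * k * ‖a‖ := fun q r hr => by
    rw [← pow_mul, dist_pow_pow_add]
    exact norm_pow_le_mul_norm.trans (by gcongr; exact_mod_cast hr)
  refine ⟨C + 6 * (2 * k * ‖a‖), fun m n => (hC (m / k) (n / k)).of_dist_le ?_ ?_ ?_⟩
  · rw [dist_self]
    positivity
  · convert hclose (m / k) (m % k) (by have := Nat.mod_lt m hk; lia) using 3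
    exact (Nat.div_add_mod m k).symm
  · convert hclose (m / k + n / k) (m % k + n % k)
      (by have := Nat.mod_lt m hk; have := Nat.mod_lt n hk; lia) using 3
    have := Nat.div_add_mod m k
    have := Nat.div_add_mod n k
    lia

theorem IsGromovHyperbolic.coarselyStarConvex_range_pow (hG : IsGromovHyperbolic G δ)
    (hmid : HasCoarseMidpoints G μ) (hball : ∀ r : ℝ, {g : G | ‖g‖ ≤ r}.Finite) (a : G) :
    CoarselyStarConvex 1 (Set.range fun n : ℕ => a ^ n) := by
  obtain ⟨C, hC⟩ := hG.exists_isAlmostBetween_pow hmid hball a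
  exact .range_of_dist_succ_le (pow_zero a) (fun n => (dist_pow_pow_add a n 1).le) hC

theorem IsGromovHyperbolic.coarselyStarConvex_zpowers (hG : IsGromovHyperbolic G δ)
    (hmid : HasCoarseMidpoints G μ) (hball : ∀ r : ℝ, {g : G | ‖g‖ ≤ r}.Finite) (a : G) :
    CoarselyStarConvex 1 (Subgroup.zpowers a : Set G) := by
  have hunion := (hG.coarselyStarConvex_range_pow hmid hball a).union
    (hG.coarselyStarConvex_range_pow hmid hball a⁻¹)
  convert hunion using 1
  ext g
  simp only [SetLike.mem_coe, Subgroup.mem_zpowers_iff, Set.mem_union, Set.mem_range]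
  constructor
  · rintro ⟨n | n, rfl⟩
    · exact .inl ⟨n, by simp⟩
    · exact .inr ⟨n + 1, by simp⟩
  · rintro (⟨n, rfl⟩ | ⟨n, rfl⟩)
    exacts [⟨n, by simp⟩, ⟨-n, by simp⟩]

theorem exists_mem_dist_le_of_finiteIndex (H : Subgroup G) [H.FiniteIndex] :
    ∃ D : ℝ, ∀ g : G, ∃ h ∈ H, dist h g ≤ D := by
  obtain ⟨D, hD⟩ := (Set.finite_range fun q : G ⧸ H => ‖q.out‖).bddAbove
  refine ⟨D, fun g => ?_⟩
  obtain ⟨h, hh⟩ := QuotientGroup.mk_out_eq_mul H g⁻¹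
  refine ⟨h, h.2, ?_⟩
  have hrep : (h : G)⁻¹ * g = ((g⁻¹ : G) : G ⧸ H).out⁻¹ := by rw [hh, mul_inv_rev, inv_inv]
  rw [dist_eq_norm_inv_mul, hrep, norm_inv']
  exact hD ⟨_, rfl⟩

theorem IsGromovHyperbolic.coarselyStarConvex_of_isVirtuallyCyclic (hG : IsGromovHyperbolic G δ)
    (hmid : HasCoarseMidpoints G μ) (hball : ∀ r : ℝ, {g : G | ‖g‖ ≤ r}.Finite)
    {C : Subgroup G} (hC : IsVirtuallyCyclic C) : CoarselyStarConvex 1 (C : Set G) := by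
  obtain ⟨Z, hZ, hindex⟩ := hC
  obtain ⟨z, rfl⟩ := (Subgroup.isCyclic_iff_exists_zpowers_eq_top Z).mp hZ
  obtain ⟨D, hD⟩ := exists_mem_dist_le_of_finiteIndex (Subgroup.zpowers z)
  refine (hG.coarselyStarConvex_zpowers hmid hball (z : G)).of_subset_of_dist_le (D := D) ?_ ?_
  · exact Subgroup.zpowers_le.mpr z.2
  · intro g hg
    obtain ⟨_, ⟨n, rfl⟩, hn⟩ := hD ⟨g, hg⟩
    exact ⟨(z : G) ^ n, ⟨n, rfl⟩, hn⟩

theorem finite_setOf_mem_mul_mem {H : Type*} [Group H] {A B : Subgroup H}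
    (hfin : ((A ⊓ B : Subgroup H) : Set H).Finite) (g : H) : {a | a ∈ A ∧ a * g ∈ B}.Finite := by
  rcases Set.eq_empty_or_nonempty {a | a ∈ A ∧ a * g ∈ B} with hempty | ⟨a₀, ha₀, hb₀⟩
  · simp [hempty]
  · refine (hfin.image (· * a₀)).subset fun a ⟨ha, hb⟩ => ⟨a * a₀⁻¹, ⟨?_, ?_⟩, by simp⟩
    · exact A.mul_mem ha (A.inv_mem ha₀)
    · simpa [mul_assoc] using B.mul_mem hb (B.inv_mem hb₀)

theorem finite_setOf_mem_exists_dist_le (hball : ∀ r : ℝ, {g : G | ‖g‖ ≤ r}.Finite)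
    {A B : Subgroup G} (hfin : ((A ⊓ B : Subgroup G) : Set G).Finite) (D : ℝ) :
    {a | a ∈ A ∧ ∃ b ∈ B, dist a b ≤ D}.Finite := by
  refine ((hball D).biUnion fun g _ => finite_setOf_mem_mul_mem hfin g).subset ?_
  rintro a ⟨ha, b, hb, hab⟩
  rw [dist_eq_norm_inv_mul] at hab
  exact Set.mem_biUnion hab ⟨ha, by simpa using hb⟩

theorem IsGromovHyperbolic.exists_norm_add_norm_le_norm_mul (hG : IsGromovHyperbolic G δ)
    (hball : ∀ r : ℝ, {g : G | ‖g‖ ≤ r}.Finite) {A B : Subgroup G}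
    (hA : CoarselyStarConvex 1 (A : Set G)) (hB : CoarselyStarConvex 1 (B : Set G))
    (hfin : ((A ⊓ B : Subgroup G) : Set G).Finite) :
    ∃ M : ℝ, ∀ a ∈ A, ∀ b ∈ B, ‖a‖ + ‖b‖ ≤ ‖a * b‖ + M := by
  obtain ⟨D, hD⟩ := hG.exists_dist_le_of_coarselyStarConvex hA hB
  obtain ⟨R, hR⟩ := ((finite_setOf_mem_exists_dist_le hball hfin D).image norm).bddAbove
  refine ⟨2 * (|R| + 1) + D, fun a ha b hb => ?_⟩
  by_contra! hlt
  have hprod : dist a⁻¹ b = ‖a * b‖ := by rw [dist_eq_norm_inv_mul, inv_inv]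
  obtain ⟨z, hz, w, hw, hrz, hzw⟩ := hD a⁻¹ (A.inv_mem ha) b hb (|R| + 1) (by positivity) (by
    rw [hprod, dist_one_left, dist_one_left, norm_inv']
    linarith)
  have hzR : ‖z‖ ≤ R := hR ⟨z, ⟨hz, w, hw, hzw⟩, rfl⟩
  rw [dist_one_left] at hrz
  linarith [le_abs_self R]

end SeminormedGroup

section WordLength

variable {G : Type*} [Group G] {X : Set G}

theorem wordLength_prod_le_length (l : List G) (hl : IsWordOver X l) :
    wordLength X l.prod ≤ l.length :=
  Nat.sInf_le ⟨l, rfl, hl, rfl⟩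

theorem wordLength_one : wordLength X (1 : G) = 0 :=
  Nat.le_zero.mp (wordLength_prod_le_length [] (List.forall_mem_nil _))

namespace IsSymmGen

theorem exists_isGeodesicWord (hX : IsSymmGen X) (g : G) :
    ∃ l : List G, IsGeodesicWord X l ∧ l.prod = g := by
  have hg : g ∈ (Subgroup.closure X).toSubmonoid := by
    rw [hX.2.2]
    trivial
  rw [Subgroup.closure_toSubmonoid, Set.union_eq_self_of_subset_right fun x hx =>
    by simpa using hX.2.1 _ hx] at hg
  obtain ⟨l, hlX, hl⟩ := Submonoid.exists_list_of_mem_closure hg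
  obtain ⟨l', hlen, hlX', hl'⟩ := Nat.sInf_mem (s := {n : ℕ | ∃ l : List G,
    l.length = n ∧ (∀ x ∈ l, x ∈ X) ∧ l.prod = g}) ⟨l.length, l, rfl, hlX, hl⟩
  subst hl'
  exact ⟨l', ⟨hlX', hlen⟩, rfl⟩

theorem wordLength_mul_le (hX : IsSymmGen X) (g h : G) :
    wordLength X (g * h) ≤ wordLength X g + wordLength X h := by
  obtain ⟨l, ⟨hlX, hl⟩, rfl⟩ := hX.exists_isGeodesicWord g
  obtain ⟨k, ⟨hkX, hk⟩, rfl⟩ := hX.exists_isGeodesicWord h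
  rw [← hl, ← hk, ← List.prod_append, ← List.length_append]
  exact wordLength_prod_le_length _ (List.forall_mem_append.mpr ⟨hlX, hkX⟩)

theorem wordLength_inv_le (hX : IsSymmGen X) (g : G) : wordLength X g⁻¹ ≤ wordLength X g := by
  obtain ⟨l, ⟨hlX, hl⟩, rfl⟩ := hX.exists_isGeodesicWord g
  rw [← hl, List.prod_inv_reverse]
  refine (wordLength_prod_le_length _ fun x hx => ?_).trans (by simp)
  rw [List.mem_reverse, List.mem_map] at hx
  obtain ⟨y, hy, rfl⟩ := hx
  exact hX.2.1 _ (hlX y hy)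

theorem wordLength_inv (hX : IsSymmGen X) (g : G) : wordLength X g⁻¹ = wordLength X g :=
  le_antisymm (hX.wordLength_inv_le g) (by simpa using hX.wordLength_inv_le g⁻¹)

/-- The word length as a seminorm; the distance of the induced `SeminormedGroup` structure is the
word metric. -/
noncomputable def wordSeminorm (hX : IsSymmGen X) : GroupSeminorm G where
  toFun g := wordLength X g
  map_one' := by simp [wordLength_one]
  mul_le' g h := by exact_mod_cast hX.wordLength_mul_le g h
  inv' g := by rw [hX.wordLength_inv]

theorem finite_setOf_wordSeminorm_le (hX : IsSymmGen X) (r : ℝ) :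
    {g : G | hX.wordSeminorm g ≤ r}.Finite := by
  have : Finite X := hX.1
  refine ((List.finite_length_le X ⌊r⌋₊).image fun l => (l.map Subtype.val).prod).subset ?_
  intro g hg
  obtain ⟨l, ⟨hlX, hl⟩, rfl⟩ := hX.exists_isGeodesicWord g
  lift l to List X using hlX
  rw [List.length_map] at hl
  exact ⟨l, hl.trans_le (Nat.le_floor hg), rfl⟩

theorem exists_mul_eq_wordLength_le (hX : IsSymmGen X) (g : G) :
    ∃ h k : G, h * k = g ∧ 2 * wordLength X h ≤ wordLength X g + 1 ∧
      2 * wordLength X k ≤ wordLength X g + 1 := by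
  obtain ⟨l, ⟨hlX, hl⟩, rfl⟩ := hX.exists_isGeodesicWord g
  have htake := wordLength_prod_le_length (X := X) (l.take (l.length / 2))
    fun x hx => hlX x (List.mem_of_mem_take hx)
  have hdrop := wordLength_prod_le_length (X := X) (l.drop (l.length / 2))
    fun x hx => hlX x (List.mem_of_mem_drop hx)
  rw [List.length_take] at htake
  rw [List.length_drop] at hdrop
  refine ⟨_, _, l.prod_take_mul_prod_drop (l.length / 2), ?_, ?_⟩ <;> lia

theorem hasCoarseMidpoints (hX : IsSymmGen X) :
    letI := hX.wordSeminorm.toSeminormedGroup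
    HasCoarseMidpoints G (1 / 2) := by
  let := hX.wordSeminorm.toSeminormedGroup
  intro x y
  obtain ⟨h, k, hhk, hh, hk⟩ := hX.exists_mul_eq_wordLength_le (x⁻¹ * y)
  have hy : (x * h)⁻¹ * y = k := by rw [mul_inv_rev, mul_assoc, ← hhk, inv_mul_cancel_left]
  simp only [dist_eq_norm_inv_mul]
  refine ⟨x * h, ?_, ?_⟩
  · rw [inv_mul_cancel_left]
    change (wordLength X h : ℝ) ≤ wordLength X (x⁻¹ * y) / 2 + 1 / 2
    have : (2 * wordLength X h : ℝ) ≤ wordLength X (x⁻¹ * y) + 1 := by exact_mod_cast hh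
    linarith
  · rw [hy]
    change (wordLength X k : ℝ) ≤ wordLength X (x⁻¹ * y) / 2 + 1 / 2
    have : (2 * wordLength X k : ℝ) ≤ wordLength X (x⁻¹ * y) + 1 := by exact_mod_cast hk
    linarith

theorem exists_le_mul_wordLength (hX : IsSymmGen X) (f : GroupSeminorm G) :
    ∃ L : ℝ, 0 ≤ L ∧ ∀ g, f g ≤ L * wordLength X g := by
  obtain ⟨L, hL⟩ := (hX.1.image f).bddAbove
  refine ⟨max L 0, le_max_right _ _, fun g => ?_⟩
  obtain ⟨l, ⟨hlX, hl⟩, rfl⟩ := hX.exists_isGeodesicWord g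
  calc f l.prod ≤ (l.map f).sum :=
        l.apply_prod_le_sum_map f (map_one_eq_zero f).le (map_mul_le_add f)
    _ ≤ (l.map f).length • max L 0 := by
        refine List.sum_le_card_nsmul _ _ fun y hy => ?_
        obtain ⟨x, hx, rfl⟩ := List.mem_map.mp hy
        exact (hL ⟨x, hlX x hx, rfl⟩).trans (le_max_left _ _)
    _ = max L 0 * wordLength X l.prod := by
        rw [List.length_map, hl, nsmul_eq_mul, mul_comm]

end IsSymmGen

theorem IsWordHyperbolic.exists_isGromovHyperbolic (hG : IsWordHyperbolic G) :
    ∃ (Y : Set G) (hY : IsSymmGen Y) (δ : ℝ),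
      letI := hY.wordSeminorm.toSeminormedGroup
      IsGromovHyperbolic G δ := by
  obtain ⟨Y, hY, δ, -, hδ⟩ := hG
  refine ⟨Y, hY, δ, fun x y z w => ?_⟩
  have h := hδ x y z w
  change (wordDist Y x z + wordDist Y y w : ℝ) ≤
    max (wordDist Y x y + wordDist Y z w : ℝ) (wordDist Y x w + wordDist Y y z) + 2 * δ
  unfold gromovProd at h
  rw [ge_iff_le, sub_le_iff_le_add, min_le_iff] at h
  rw [← max_add_add_right, le_max_iff]
  rcases h with h | h
  · exact .inl (by linarith)
  · exact .inr (by linarith)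

theorem IsWordHyperbolic.exists_wordSeminorm_add_wordSeminorm_le (hG : IsWordHyperbolic G)
    {A B : Subgroup G} (hA : IsVirtuallyCyclic A) (hB : IsVirtuallyCyclic B)
    (hfin : ((A ⊓ B : Subgroup G) : Set G).Finite) :
    ∃ (Y : Set G) (hY : IsSymmGen Y) (M : ℝ), ∀ a ∈ A, ∀ b ∈ B,
      hY.wordSeminorm a + hY.wordSeminorm b ≤ hY.wordSeminorm (a * b) + M := by
  obtain ⟨Y, hY, δ, hδ⟩ := hG.exists_isGromovHyperbolic
  let := hY.wordSeminorm.toSeminormedGroup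
  have hmid := hY.hasCoarseMidpoints
  have hball := hY.finite_setOf_wordSeminorm_le
  exact ⟨Y, hY, hδ.exists_norm_add_norm_le_norm_mul hball
    (hδ.coarselyStarConvex_of_isVirtuallyCyclic hmid hball hA)
    (hδ.coarselyStarConvex_of_isVirtuallyCyclic hmid hball hB) hfin⟩

theorem IsWordHyperbolic.exists_wordLength_add_wordLength_le (hG : IsWordHyperbolic G)
    (hX : IsSymmGen X) {A B : Subgroup G} (hA : IsVirtuallyCyclic A) (hB : IsVirtuallyCyclic B)
    (hfin : ((A ⊓ B : Subgroup G) : Set G).Finite) :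
    ∃ L M : ℝ, ∀ a ∈ A, ∀ b ∈ B,
      (wordLength X a + wordLength X b : ℝ) ≤ L * wordLength X (a * b) + M := by
  obtain ⟨Y, hY, M, hM⟩ := hG.exists_wordSeminorm_add_wordSeminorm_le hA hB hfin
  obtain ⟨L, -, hL⟩ := hX.exists_le_mul_wordLength hY.wordSeminorm
  obtain ⟨L', hL'₀, hL'⟩ := hY.exists_le_mul_wordLength hX.wordSeminorm
  refine ⟨L' * L, L' * M, fun a ha b hb => ?_⟩
  calc (wordLength X a + wordLength X b : ℝ)
      ≤ L' * wordLength Y a + L' * wordLength Y b := add_le_add (hL' a) (hL' b)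
    _ = L' * (wordLength Y a + wordLength Y b) := by rw [mul_add]
    _ ≤ L' * (wordLength Y (a * b) + M) := mul_le_mul_of_nonneg_left (hM a ha b hb) hL'₀
    _ ≤ L' * (L * wordLength X (a * b) + M) := by gcongr; exact hL _
    _ = L' * L * wordLength X (a * b) + L' * M := by rw [mul_add, mul_assoc]

end WordLength

theorem exists_pos_div_sub_le_of_le_mul_add (L M : ℝ) :
    ∃ K : ℝ, 0 < K ∧ ∀ x u : ℝ, 0 ≤ u → x ≤ L * u + M → x / K - K ≤ u := by
  refine ⟨1 + |L| + |M|, by positivity, fun x u hu hx => ?_⟩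
  rw [sub_le_iff_le_add, div_le_iff₀ (by positivity)]
  calc x ≤ L * u + M := hx
    _ ≤ |L| * u + |M| := by gcongr <;> exact le_abs_self _
    _ ≤ (u + (1 + |L| + |M|)) * (1 + |L| + |M|) := by
        nlinarith [abs_nonneg L, abs_nonneg M, mul_nonneg hu (abs_nonneg M)]

theorem shortest_coset_rep_length_lower_bound_general {G : Type*} [Group G]
    (hG : IsWordHyperbolic G) {X : Set G} (hX : IsSymmGen X) {C₁ C₂ : Subgroup G}
    (hvc₁ : IsVirtuallyCyclic C₁) (hvc₂ : IsVirtuallyCyclic C₂)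
    (hfin : ((C₁ ⊓ C₂ : Subgroup G) : Set G).Finite) :
    ∃ K : ℝ, 0 < K ∧ ∀ c₁ ∈ C₁, ∀ c₂ ∈ C₂,
      (wordLength X c₁ : ℝ) / K - K ≤ wordLength X (c₁ * c₂) := by
  obtain ⟨L, M, hLM⟩ := hG.exists_wordLength_add_wordLength_le hX hvc₁ hvc₂ hfin
  obtain ⟨K, hK, hbound⟩ := exists_pos_div_sub_le_of_le_mul_add L M
  refine ⟨K, hK, fun c₁ hc₁ c₂ hc₂ => hbound _ _ (Nat.cast_nonneg _) ?_⟩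
  exact (le_add_of_nonneg_right (Nat.cast_nonneg _)).trans (hLM c₁ hc₁ c₂ hc₂)

/-- **Lemma 2.2(6).** For virtually cyclic subgroups with finite intersection, the shortest
element of the coset `c₁C₂` has length at least `l(c₁)/K₃ - K₃`. -/
theorem shortest_coset_rep_length_lower_bound {G : Type u} [Group G]
    (hG : IsWordHyperbolic G) (X : Set G) (hX : IsSymmGen X)
    (C₁ C₂ : Subgroup G)
    (hvc₁ : IsVirtuallyCyclic ↥C₁) (hvc₂ : IsVirtuallyCyclic ↥C₂)
    (hfin : ((C₁ ⊓ C₂ : Subgroup G) : Set G).Finite) :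
    ∃ K₃ : ℝ, 0 < K₃ ∧
      ∀ c₁ ∈ C₁, ∀ u : G,
        ShortestIn X u {x | ∃ c ∈ C₂, x = c₁ * c} →
        (wordLength X u : ℝ) ≥ (wordLength X c₁ : ℝ) / K₃ - K₃ := by
  obtain ⟨K, hK, hbound⟩ := shortest_coset_rep_length_lower_bound_general hG hX hvc₁ hvc₂ hfin
  exact ⟨K, hK, fun c₁ hc₁ _ ⟨⟨c₂, hc₂, hu⟩, _⟩ => hu ▸ hbound c₁ hc₁ c₂ hc₂⟩
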